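/- arXiv:2402.16748 — 4 statements merged into one kernel-verified Lean document; each statement's English description precedes it below -/
import Mathlib

section
/- (Jacobian of the preconditioned estimator.) For all (x, y) and every direction v ∈ ℝ^{d_x}: D_xΩ^P(x, y)[v] = D_xΩ(x̃(x, y), y)[E^P(x, y)v], where E^P(x, y)v := v − P(x, y)^{−1}(D_xF(x, y)[v]) + P(x, y)^{−1}(D_xP(x, y)[v]) P(x, y)^{−1} F(x, y). In particular, at the root, E^P(x⋆(y), y) = I_{d_x} − P(x⋆(y), y)^{−1} F_1(x⋆(y), y). -/
noncomputable section

open ContinuousLinearMap RealInnerProductSpace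

abbrev E (n : ℕ) : Type := EuclideanSpace ℝ (Fin n)

variable {dx dy : ℕ}

/-- Partial Fréchet derivative in the first variable. -/
def pd1 {k : ℕ} (G : E dx × E dy → E k) (x : E dx) (y : E dy) : E dx →L[ℝ] E k :=
  fderiv ℝ (fun x' => G (x', y)) x

/-- Partial Fréchet derivative in the second variable. -/
def pd2 {k : ℕ} (G : E dx × E dy → E k) (x : E dx) (y : E dy) : E dy →L[ℝ] E k :=
  fderiv ℝ (fun y' => G (x, y')) y

/-- Partial gradient in the first variable. -/
def grad1 (g : E dx × E dy → ℝ) (x : E dx) (y : E dy) : E dx :=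
  gradient (fun x' => g (x', y)) x

/-- Partial gradient in the second variable. -/
def grad2 (g : E dx × E dy → ℝ) (x : E dx) (y : E dy) : E dy :=
  gradient (fun y' => g (x, y')) y

/-- Ψ(x, y) = −F₂(x,y)^⊤ ∘ (F₁(x,y)^⊤)⁻¹. -/
def Psi (F : E dx × E dy → E dx) (x : E dx) (y : E dy) : E dx →L[ℝ] E dy :=
  -((adjoint (pd2 F x y)).comp (Ring.inverse (adjoint (pd1 F x y))))

/-- The IFT formula Ω(x,y) = g₂(x,y) + Ψ(x,y) g₁(x,y). -/
def Omega (F : E dx × E dy → E dx) (g : E dx × E dy → ℝ) (x : E dx) (y : E dy) : E dy :=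
  grad2 g x y + Psi F x y (grad1 g x y)

/-- Preconditioning step x̃(x,y) = x − P(x,y)⁻¹ F(x,y). -/
def xtilde (F : E dx × E dy → E dx) (P : E dx × E dy → (E dx →L[ℝ] E dx))
    (x : E dx) (y : E dy) : E dx :=
  x - Ring.inverse (P (x, y)) (F (x, y))

/-- Preconditioned formula Ωᴾ(x,y) = Ω(x̃(x,y), y). -/
def OmegaP (F : E dx × E dy → E dx) (g : E dx × E dy → ℝ)
    (P : E dx × E dy → (E dx →L[ℝ] E dx)) (x : E dx) (y : E dy) : E dy :=
  Omega F g (xtilde F P x y) y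

/-- Eᴾ(x,y)v = v − P(x,y)⁻¹(D_xF(x,y)[v]) + P(x,y)⁻¹(D_xP(x,y)[v]) P(x,y)⁻¹ F(x,y). -/
def EPapp (F : E dx × E dy → E dx) (P : E dx × E dy → (E dx →L[ℝ] E dx))
    (x : E dx) (y : E dy) (v : E dx) : E dx :=
  v - Ring.inverse (P (x, y)) (pd1 F x y v) +
    Ring.inverse (P (x, y))
      ((fderiv ℝ (fun x' => P (x', y)) x v) (Ring.inverse (P (x, y)) (F (x, y))))

/- `Ω(·, y)` is differentiable wherever `F` and `g` are `C²` and `F₁` is invertible, because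
inversion of operators is differentiable at invertible operators. So the chain rule applies to
`Ωᴾ(·, y) = Ω(·, y) ∘ x̃(·, y)`, and `Eᴾ` is the Jacobian of `x̃`, computed with
`D(A⁻¹)[v] = -A⁻¹ (DA[v]) A⁻¹`. At a root of `F`, the term coming from `D(P⁻¹)` is applied to the
zero vector. -/

section Preconditioning

variable {𝕜 V X : Type*} [NontriviallyNormedField 𝕜] [NormedAddCommGroup V] [NormedSpace 𝕜 V]
  [NormedAddCommGroup X] [NormedSpace 𝕜 X]

lemma hasFDerivAt_ringInverse_apply [CompleteSpace X] {A : V → X →L[𝕜] X} {f : V → X} {x : V}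
    (hA : DifferentiableAt 𝕜 A x) (hf : DifferentiableAt 𝕜 f x) (hAx : IsUnit (A x)) :
    HasFDerivAt (fun x' => Ring.inverse (A x') (f x'))
      (Ring.inverse (A x) ∘L fderiv 𝕜 f x -
        Ring.inverse (A x) ∘L (fderiv 𝕜 A x).flip (Ring.inverse (A x) (f x))) x := by
  obtain ⟨u, hu⟩ := hAx
  have hinverse := hasFDerivAt_ringInverse (𝕜 := 𝕜) u
  rw [hu] at hinverse
  refine ((hinverse.comp x hA.hasFDerivAt).clm_apply hf.hasFDerivAt).congr_fderiv ?_
  ext v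
  simp [← hu, sub_eq_add_neg]

/-- The preconditioned Newton-type step `x - P(x)⁻¹ f(x)` towards a zero of `f`. With
`f = F(·, y)` and `P = P(·, y)` it is the paper's `x̃(x, y)`. Since `Ring.inverse` is zero on
non-units, the step stays at `x` where `P x` is not invertible. -/
def preconditionedStep (P : X → X →L[𝕜] X) (f : X → X) (x : X) : X :=
  x - Ring.inverse (P x) (f x)

/-- The Jacobian of `preconditionedStep P f`, as an operator; with `f = F(·, y)` and `P = P(·, y)`
it is the paper's `Eᴾ(x, y)`. The `flip` turns `v ↦ (DP(x)[v]) w` into a linear map of `v`. -/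
def preconditionedStepDeriv (P : X → X →L[𝕜] X) (f : X → X) (x : X) : X →L[𝕜] X :=
  .id 𝕜 X - Ring.inverse (P x) ∘L fderiv 𝕜 f x +
    Ring.inverse (P x) ∘L (fderiv 𝕜 P x).flip (Ring.inverse (P x) (f x))

lemma hasFDerivAt_preconditionedStep [CompleteSpace X] {P : X → X →L[𝕜] X} {f : X → X} {x : X}
    (hP : DifferentiableAt 𝕜 P x) (hf : DifferentiableAt 𝕜 f x) (hPx : IsUnit (P x)) :
    HasFDerivAt (preconditionedStep P f) (preconditionedStepDeriv P f x) x :=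
  ((hasFDerivAt_id x).sub (hasFDerivAt_ringInverse_apply hP hf hPx)).congr_fderiv
    (by rw [preconditionedStepDeriv]; abel)

lemma preconditionedStepDeriv_of_eq_zero (P : X → X →L[𝕜] X) {f : X → X} {x : X} (hfx : f x = 0) :
    preconditionedStepDeriv P f x = .id 𝕜 X - Ring.inverse (P x) ∘L fderiv 𝕜 f x := by
  simp only [preconditionedStepDeriv, hfx, map_zero, comp_zero, add_zero]

end Preconditioning

section PartialDerivatives

variable {𝕜 V W Z : Type*} [NontriviallyNormedField 𝕜] [NormedAddCommGroup V] [NormedSpace 𝕜 V]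
  [NormedAddCommGroup W] [NormedSpace 𝕜 W] [NormedAddCommGroup Z] [NormedSpace 𝕜 Z]
  {G : V → W → Z} {x : V} {y : W}

lemma differentiableAt_fderiv_left (hG : ContDiffAt 𝕜 2 (Function.uncurry G) (x, y)) :
    DifferentiableAt 𝕜 (fun x' => fderiv 𝕜 (G · y) x') x :=
  have hslice : ContDiffAt 𝕜 2 (G · y) x := hG.comp x (contDiff_prodMk_left y).contDiffAt
  (hslice.fderiv_right (m := 1) (by norm_num)).differentiableAt one_ne_zero

lemma differentiableAt_fderiv_right (hG : ContDiffAt 𝕜 2 (Function.uncurry G) (x, y)) :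
    DifferentiableAt 𝕜 (fun x' => fderiv 𝕜 (G x') y) x :=
  (ContDiffAt.fderiv (m := 1) hG contDiffAt_const (by norm_num)).differentiableAt one_ne_zero

end PartialDerivatives

section ImplicitGradient

-- Adjoints and Riesz representatives are conjugate-linear in Mathlib, even over `ℝ`; additivity
-- and continuity are what is left to exploit.
lemma differentiable_of_continuous_addMonoidHomClass {V W L : Type*} [NormedAddCommGroup V]
    [NormedSpace ℝ V] [NormedAddCommGroup W] [NormedSpace ℝ W] [FunLike L V W]
    [AddMonoidHomClass L V W] (f : L) (hf : Continuous f) : Differentiable ℝ f :=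
  ((f : V →+ W).toRealLinearMap hf).differentiable

variable {X Y : Type*} [NormedAddCommGroup X] [InnerProductSpace ℝ X] [CompleteSpace X]
  [NormedAddCommGroup Y] [InnerProductSpace ℝ Y] [CompleteSpace Y]

lemma differentiable_adjoint : Differentiable ℝ (fun A : X →L[ℝ] Y => adjoint A) :=
  differentiable_of_continuous_addMonoidHomClass adjoint adjoint.continuous

lemma differentiable_toDual_symm : Differentiable ℝ (InnerProductSpace.toDual ℝ X).symm :=
  differentiable_of_continuous_addMonoidHomClass _ (InnerProductSpace.toDual ℝ X).symm.continuous

/-- The paper's `Ω(x, y)`, on Hilbert spaces and for curried `F` and `g`. When `F x y = 0`, it is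
the gradient at `y` of `y ↦ g(x⋆(y), y)` given by the implicit function theorem. -/
def implicitGradient (F : X → Y → X) (g : X → Y → ℝ) (x : X) (y : Y) : Y :=
  gradient (g x) y +
    (-(adjoint (fderiv ℝ (F x) y) ∘L Ring.inverse (adjoint (fderiv ℝ (F · y) x))))
      (gradient (g · y) x)

lemma differentiableAt_implicitGradient {F : X → Y → X} {g : X → Y → ℝ} {x : X} {y : Y}
    (hF : ContDiffAt ℝ 2 (Function.uncurry F) (x, y))
    (hg : ContDiffAt ℝ 2 (Function.uncurry g) (x, y))
    (hF₁ : IsUnit (fderiv ℝ (F · y) x)) :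
    DifferentiableAt ℝ (fun x' => implicitGradient F g x' y) x := by
  have hg₁ : DifferentiableAt ℝ (fun x' => gradient (g · y) x') x :=
    differentiable_toDual_symm.differentiableAt.comp x (differentiableAt_fderiv_left hg)
  have hg₂ : DifferentiableAt ℝ (fun x' => gradient (g x') y) x :=
    differentiable_toDual_symm.differentiableAt.comp x (differentiableAt_fderiv_right hg)
  have hF₂_adjoint : DifferentiableAt ℝ (fun x' => adjoint (fderiv ℝ (F x') y)) x :=
    differentiable_adjoint.differentiableAt.comp x (differentiableAt_fderiv_right hF)
  have hF₁_adjoint : DifferentiableAt ℝ (fun x' => adjoint (fderiv ℝ (F · y) x')) x :=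
    differentiable_adjoint.differentiableAt.comp x (differentiableAt_fderiv_left hF)
  have hF₁_adjoint_unit : IsUnit (adjoint (fderiv ℝ (F · y) x)) := hF₁.star
  have hF₁_inverse :
      DifferentiableAt ℝ (fun x' => Ring.inverse (adjoint (fderiv ℝ (F · y) x'))) x :=
    DifferentiableAt.fun_comp' x (differentiableAt_inverse hF₁_adjoint_unit) hF₁_adjoint
  exact hg₂.add ((hF₂_adjoint.clm_comp hF₁_inverse).neg.clm_apply hg₁)

theorem stmt6_general {F : X → Y → X} {g : X → Y → ℝ} {P : X → X →L[ℝ] X} {x : X} {y : Y}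
    (hF : ContDiff ℝ 2 (Function.uncurry F)) (hg : ContDiff ℝ 2 (Function.uncurry g))
    (hF₁ : IsUnit (fderiv ℝ (F · y) (preconditionedStep P (F · y) x)))
    (hP : DifferentiableAt ℝ P x) (hPx : IsUnit (P x)) :
    HasFDerivAt (fun x' => implicitGradient F g (preconditionedStep P (F · y) x') y)
      (fderiv ℝ (fun x' => implicitGradient F g x' y) (preconditionedStep P (F · y) x) ∘L
        preconditionedStepDeriv P (F · y) x) x ∧
    (F x y = 0 → preconditionedStepDeriv P (F · y) x =
      .id ℝ X - Ring.inverse (P x) ∘L fderiv ℝ (F · y) x) := by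
  have hFy : Differentiable ℝ (F · y) :=
    (hF.comp (contDiff_prodMk_left y)).differentiable two_ne_zero
  have hΩ := differentiableAt_implicitGradient hF.contDiffAt hg.contDiffAt hF₁
  exact ⟨hΩ.hasFDerivAt.comp x (hasFDerivAt_preconditionedStep hP (hFy x) hPx),
    preconditionedStepDeriv_of_eq_zero P (f := (F · y))⟩

end ImplicitGradient

/-- Jacobian of the preconditioned estimator. -/
theorem stmt6 (dx dy : ℕ) (hdx : 0 < dx) (hdy : 0 < dy)
    (F : E dx × E dy → E dx) (g : E dx × E dy → ℝ)
    (hF : ContDiff ℝ (⊤ : ℕ∞) F) (hg : ContDiff ℝ (⊤ : ℕ∞) g)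
    (hinv : ∀ (x : E dx) (y : E dy), IsUnit (pd1 F x y))
    (xs : E dy → E dx) (hxs : Differentiable ℝ xs)
    (hroot : ∀ y : E dy, F (xs y, y) = 0)
    (P : E dx × E dy → (E dx →L[ℝ] E dx))
    (hP : ContDiff ℝ 1 P)
    (hPinv : ∀ (x : E dx) (y : E dy), IsUnit (P (x, y))) :
    (∀ (x : E dx) (y : E dy) (v : E dx),
      fderiv ℝ (fun x' => OmegaP F g P x' y) x v =
        fderiv ℝ (fun x' => Omega F g x' y) (xtilde F P x y) (EPapp F P x y v)) ∧
    (∀ (y : E dy) (v : E dx),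
      EPapp F P (xs y) y v = v - Ring.inverse (P (xs y, y)) (pd1 F (xs y) y v)) := by
  have key (x y) := stmt6_general (F := Function.curry F) (g := Function.curry g)
    (contDiff_infty.1 hF 2) (contDiff_infty.1 hg 2) (hinv _ y)
    ((hP.comp (contDiff_prodMk_left y)).differentiable one_ne_zero x) (hPinv x y)
  exact ⟨fun x y => DFunLike.congr_fun (key x y).1.fderiv,
    fun y => DFunLike.congr_fun ((key (xs y) y).2 (hroot y))⟩
end
end

section
/- (Consistency of the reparameterized estimator.) For every y ∈ ℝ^{d_y}, writing x⋆ := x⋆(y) and z⋆ := φ(·, y)^{−1}(x⋆): V^φ(x⋆, y) = F_1(x⋆, y) (hence invertible), U^φ(x⋆, y) = F_2(x⋆, y) + F_1(x⋆, y) φ_2(z⋆, y), Ψ^φ(x⋆, y) = Ψ(x⋆, y), and therefore Ω^φ(x⋆, y) = Ω(x⋆, y) = ∇h(y). -/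
/-!
Differentiating `F (x⋆(y), y) = 0` gives `F₂ = -F₁ x⋆'`, so on the graph of `x⋆` the matrix `Ψ` is
the transpose of `x⋆'`, and the IFT formula is the chain rule for `y ↦ g (x⋆(y), y)` in gradient
form. The second derivatives of `φ` enter `Uᶠ` and `Vᶠ` only through their contraction with
`F (x, y)`, which vanishes at a root; the remaining `φ₂`-terms of `Ψᶠ` cancel because the transpose
of `F₁ φ₂` composed with `(F₁^⊤)⁻¹` is `φ₂^⊤`.
-/

noncomputable section

open ContinuousLinearMap RealInnerProductSpace

variable {dx dy : ℕ}

/-- φ₁₁(z,y)[w]: Hessian in z of z ↦ ⟪w, φ(z,y)⟫. -/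
def phi11 (φ : E dx × E dy → E dx) (z : E dx) (y : E dy) (w : E dx) : E dx →L[ℝ] E dx :=
  fderiv ℝ (fun z' => gradient (fun z'' => ⟪w, φ (z'', y)⟫) z') z

/-- φ₂₁(z,y)[w]: mixed second derivative of (z,y) ↦ ⟪w, φ(z,y)⟫, an element of ℝ^{dx×dy}. -/
def phi21 (φ : E dx × E dy → E dx) (z : E dx) (y : E dy) (w : E dx) : E dy →L[ℝ] E dx :=
  fderiv ℝ (fun y' => gradient (fun z' => ⟪w, φ (z', y')⟫) z) y

/-- Uᶠ(x,y) = F₂ + F₁ φ₂(z,y) + φ₁(z,y)⁻¹ (φ₂₁(z,y)[F(x,y)]), with z = φ(·,y)⁻¹(x). -/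
def Uphi (F : E dx × E dy → E dx) (φ : E dx × E dy → E dx) (φinv : E dx × E dy → E dx)
    (x : E dx) (y : E dy) : E dy →L[ℝ] E dx :=
  pd2 F x y + (pd1 F x y).comp (pd2 φ (φinv (x, y)) y) +
    (Ring.inverse (pd1 φ (φinv (x, y)) y)).comp (phi21 φ (φinv (x, y)) y (F (x, y)))

/-- Vᶠ(x,y) = (φ₁^⊤)⁻¹ (φ₁₁(z,y)[F(x,y)]) φ₁⁻¹ + F₁(x,y), with z = φ(·,y)⁻¹(x). -/
def Vphi (F : E dx × E dy → E dx) (φ : E dx × E dy → E dx) (φinv : E dx × E dy → E dx)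
    (x : E dx) (y : E dy) : E dx →L[ℝ] E dx :=
  (Ring.inverse (adjoint (pd1 φ (φinv (x, y)) y))).comp
      ((phi11 φ (φinv (x, y)) y (F (x, y))).comp (Ring.inverse (pd1 φ (φinv (x, y)) y))) +
    pd1 F x y

/-- Ψᶠ(x,y) = φ₂(z,y)^⊤ − Uᶠ(x,y)^⊤ (Vᶠ(x,y)^⊤)⁻¹. -/
def Psiphi (F : E dx × E dy → E dx) (φ : E dx × E dy → E dx) (φinv : E dx × E dy → E dx)
    (x : E dx) (y : E dy) : E dx →L[ℝ] E dy :=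
  adjoint (pd2 φ (φinv (x, y)) y) -
    (adjoint (Uphi F φ φinv x y)).comp (Ring.inverse (adjoint (Vphi F φ φinv x y)))

/-- The reparameterized formula Ωᶠ(x,y) = g₂(x,y) + Ψᶠ(x,y) g₁(x,y). -/
def Omegaphi (F : E dx × E dy → E dx) (g : E dx × E dy → ℝ)
    (φ : E dx × E dy → E dx) (φinv : E dx × E dy → E dx) (x : E dx) (y : E dy) : E dy :=
  grad2 g x y + Psiphi F φ φinv x y (grad1 g x y)

open scoped Topology

section Graph

variable {𝕜 A B N : Type*} [NontriviallyNormedField 𝕜] [NormedAddCommGroup A] [NormedSpace 𝕜 A]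
  [NormedAddCommGroup B] [NormedSpace 𝕜 B] [NormedAddCommGroup N] [NormedSpace 𝕜 N]
  {G : A × B → N} {u : B → A} {u' : B →L[𝕜] A} {y : B}

theorem hasFDerivAt_along_graph (hG : DifferentiableAt 𝕜 G (u y, y)) (hu : HasFDerivAt u u' y) :
    HasFDerivAt (fun y' => G (u y', y'))
      (fderiv 𝕜 (fun x => G (x, y)) (u y) ∘L u' + fderiv 𝕜 (fun y' => G (u y, y')) y) y := by
  have hG₁ : HasFDerivAt (fun x => G (x, y)) _ (u y) :=
    hG.hasFDerivAt.comp (u y) (hasFDerivAt_prodMk_left (u y) y)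
  have hG₂ : HasFDerivAt (fun y' => G (u y, y')) _ y :=
    hG.hasFDerivAt.comp y (hasFDerivAt_prodMk_right (u y) y)
  have htotal : HasFDerivAt (fun y' => G (u y', y')) _ y :=
    HasFDerivAt.comp (f := fun y' => (u y', y')) y hG.hasFDerivAt (hu.prodMk (hasFDerivAt_id y))
  rw [hG₁.fderiv, hG₂.fderiv]
  convert htotal using 1
  ext v
  simp [← map_add]

theorem fderiv_snd_eq_neg_fderiv_fst_comp (hG : DifferentiableAt 𝕜 G (u y, y))
    (hu : HasFDerivAt u u' y) (hroot : ∀ᶠ y' in 𝓝 y, G (u y', y') = 0) :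
    fderiv 𝕜 (fun y' => G (u y, y')) y = -(fderiv 𝕜 (fun x => G (x, y)) (u y) ∘L u') :=
  have hzero : HasFDerivAt (fun y' => G (u y', y')) (0 : B →L[𝕜] N) y :=
    (hasFDerivAt_const 0 y).congr_of_eventuallyEq hroot
  eq_neg_of_add_eq_zero_right ((hasFDerivAt_along_graph hG hu).unique hzero)

end Graph

section Adjoint

variable {𝕜 H K : Type*} [RCLike 𝕜] [NormedAddCommGroup H] [InnerProductSpace 𝕜 H]
  [CompleteSpace H] [NormedAddCommGroup K] [InnerProductSpace 𝕜 K] [CompleteSpace K]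

theorem hasGradientAt_along_graph {g : H × K → 𝕜} {u : K → H} {u' : K →L[𝕜] H} {y : K}
    (hg : DifferentiableAt 𝕜 g (u y, y)) (hu : HasFDerivAt u u' y) :
    HasGradientAt (fun y' => g (u y', y'))
      (gradient (fun y' => g (u y, y')) y + adjoint u' (gradient (fun x => g (x, y)) (u y))) y := by
  refine hasGradientAt_iff_hasFDerivAt.mpr ((hasFDerivAt_along_graph hg hu).congr_fderiv ?_)
  ext v
  simp [adjoint_inner_left, inner_gradient_left, add_comm]

theorem adjoint_comp_comp_inverse_adjoint {T : H →L[𝕜] H} (hT : IsUnit T) (S : K →L[𝕜] H) :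
    adjoint (T ∘L S) ∘L Ring.inverse (adjoint T) = adjoint S := by
  have hcancel : adjoint T ∘L Ring.inverse (adjoint T) = .id 𝕜 H :=
    Ring.mul_inverse_cancel _ hT.star
  rw [adjoint_comp, comp_assoc, hcancel, comp_id]

end Adjoint

section ImplicitFunction

variable {F : E dx × E dy → E dx} {g : E dx × E dy → ℝ} {u : E dy → E dx}
  {u' : E dy →L[ℝ] E dx} {y : E dy}

theorem Psi_eq_adjoint (hF : DifferentiableAt ℝ F (u y, y)) (hF₁ : IsUnit (pd1 F (u y) y))
    (hu : HasFDerivAt u u' y) (hroot : ∀ᶠ y' in 𝓝 y, F (u y', y') = 0) :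
    Psi F (u y) y = adjoint u' := by
  have hF₂ : pd2 F (u y) y = -(pd1 F (u y) y ∘L u') :=
    fderiv_snd_eq_neg_fderiv_fst_comp hF hu hroot
  rw [Psi, hF₂, map_neg, neg_comp, neg_neg, adjoint_comp_comp_inverse_adjoint hF₁]

theorem hasGradientAt_Omega (hF : DifferentiableAt ℝ F (u y, y))
    (hg : DifferentiableAt ℝ g (u y, y)) (hF₁ : IsUnit (pd1 F (u y) y))
    (hu : DifferentiableAt ℝ u y) (hroot : ∀ᶠ y' in 𝓝 y, F (u y', y') = 0) :
    HasGradientAt (fun y' => g (u y', y')) (Omega F g (u y) y) y := by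
  rw [Omega, Psi_eq_adjoint hF hF₁ hu.hasFDerivAt hroot]
  exact hasGradientAt_along_graph hg hu.hasFDerivAt

end ImplicitFunction

section Reparameterization

theorem phi11_zero (φ : E dx × E dy → E dx) (z : E dx) (y : E dy) : phi11 φ z y 0 = 0 := by
  simp [phi11]

theorem phi21_zero (φ : E dx × E dy → E dx) (z : E dx) (y : E dy) : phi21 φ z y 0 = 0 := by
  simp [phi21]

variable {F φ φinv : E dx × E dy → E dx} {x : E dx} {y : E dy}

theorem Vphi_eq_of_root (hroot : F (x, y) = 0) : Vphi F φ φinv x y = pd1 F x y := by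
  rw [Vphi, hroot, phi11_zero, zero_comp, comp_zero, zero_add]

theorem Uphi_eq_of_root (hroot : F (x, y) = 0) :
    Uphi F φ φinv x y = pd2 F x y + pd1 F x y ∘L pd2 φ (φinv (x, y)) y := by
  rw [Uphi, hroot, phi21_zero, comp_zero, add_zero]

theorem Psiphi_eq_Psi_of_root (hroot : F (x, y) = 0) (hF₁ : IsUnit (pd1 F x y)) :
    Psiphi F φ φinv x y = Psi F x y := by
  rw [Psiphi, Psi, Vphi_eq_of_root hroot, Uphi_eq_of_root hroot, map_add, add_comp,
    adjoint_comp_comp_inverse_adjoint hF₁]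
  abel

theorem Omegaphi_eq_Omega_of_root (g : E dx × E dy → ℝ) (hroot : F (x, y) = 0)
    (hF₁ : IsUnit (pd1 F x y)) : Omegaphi F g φ φinv x y = Omega F g x y := by
  rw [Omegaphi, Omega, Psiphi_eq_Psi_of_root hroot hF₁]

end Reparameterization

theorem stmt8_general {F φ φinv : E dx × E dy → E dx} {g : E dx × E dy → ℝ} {xs : E dy → E dx}
    {y : E dy} (hF : DifferentiableAt ℝ F (xs y, y)) (hg : DifferentiableAt ℝ g (xs y, y))
    (hF₁ : IsUnit (pd1 F (xs y) y)) (hxs : DifferentiableAt ℝ xs y)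
    (hroot : ∀ᶠ y' in 𝓝 y, F (xs y', y') = 0)
    (_hφ : ContDiffAt ℝ 2 φ (φinv (xs y, y), y)) (_hφinv : φ (φinv (xs y, y), y) = xs y)
    (_hφ₁ : IsUnit (pd1 φ (φinv (xs y, y)) y)) :
    Vphi F φ φinv (xs y) y = pd1 F (xs y) y ∧
    Uphi F φ φinv (xs y) y = pd2 F (xs y) y + pd1 F (xs y) y ∘L pd2 φ (φinv (xs y, y)) y ∧
    Psiphi F φ φinv (xs y) y = Psi F (xs y) y ∧
    Omegaphi F g φ φinv (xs y) y = Omega F g (xs y) y ∧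
    HasGradientAt (fun y' => g (xs y', y')) (Omega F g (xs y) y) y :=
  have hrooty : F (xs y, y) = 0 := hroot.self_of_nhds
  ⟨Vphi_eq_of_root hrooty, Uphi_eq_of_root hrooty, Psiphi_eq_Psi_of_root hrooty hF₁,
    Omegaphi_eq_Omega_of_root g hrooty hF₁, hasGradientAt_Omega hF hg hF₁ hxs hroot⟩

/-- consistency of the reparameterized estimator. -/
theorem stmt8 (dx dy : ℕ) (hdx : 0 < dx) (hdy : 0 < dy)
    (F : E dx × E dy → E dx) (g : E dx × E dy → ℝ)
    (hF : ContDiff ℝ (⊤ : ℕ∞) F) (hg : ContDiff ℝ (⊤ : ℕ∞) g)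
    (hinv : ∀ (x : E dx) (y : E dy), IsUnit (pd1 F x y))
    (xs : E dy → E dx) (hxs : Differentiable ℝ xs)
    (hroot : ∀ y : E dy, F (xs y, y) = 0)
    (h : E dy → ℝ) (hh : ∀ y : E dy, h y = g (xs y, y))
    (φ : E dx × E dy → E dx) (hφ : ContDiff ℝ (⊤ : ℕ∞) φ)
    (φinv : E dx × E dy → E dx) (hφinv : ContDiff ℝ (⊤ : ℕ∞) φinv)
    (hleft : ∀ (z : E dx) (y : E dy), φinv (φ (z, y), y) = z)
    (hright : ∀ (x : E dx) (y : E dy), φ (φinv (x, y), y) = x)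
    (hphi1 : ∀ (z : E dx) (y : E dy), IsUnit (pd1 φ z y)) :
    ∀ y : E dy,
      Vphi F φ φinv (xs y) y = pd1 F (xs y) y ∧
      Uphi F φ φinv (xs y) y =
        pd2 F (xs y) y + (pd1 F (xs y) y).comp (pd2 φ (φinv (xs y, y)) y) ∧
      Psiphi F φ φinv (xs y) y = Psi F (xs y) y ∧
      Omegaphi F g φ φinv (xs y) y = Omega F g (xs y) y ∧
      Omega F g (xs y) y = gradient h y := by
  intro y
  obtain ⟨hV, hU, hΨ, hΩ, hgrad⟩ := stmt8_general (hF.differentiable (by simp) _)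
    (hg.differentiable (by simp) _) (hinv _ _) (hxs y) (.of_forall hroot)
    (contDiff_infty.mp hφ 2).contDiffAt (hright (xs y) y) (hphi1 _ _)
  exact ⟨hV, hU, hΨ, hΩ, funext hh ▸ hgrad.gradient.symm⟩
end
end

section
/- (1-D super-efficiency characterization.) The reparameterized formula Ω^φ is super-efficient, i.e. ∂_xΩ^φ(x⋆(y), y) = 0 for all y ∈ ℝ, if and only if for all y ∈ ℝ: φ_{12}(z⋆(y), y)/φ_1(z⋆(y), y) − φ_2(z⋆(y), y)·φ_{11}(z⋆(y), y)/φ_1(z⋆(y), y)² − F_2(x⋆(y), y)·φ_{11}(z⋆(y), y)/(F_1(x⋆(y), y)·φ_1(z⋆(y), y)²) = g_{12}(x⋆(y), y)/g_1(x⋆(y), y) − F_{12}(x⋆(y), y)/F_1(x⋆(y), y), where z⋆(y) := φ(·, y)^{−1}(x⋆(y)). -/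
noncomputable section

/-- Partial derivative in the first (scalar) variable. -/
def d1 (G : ℝ × ℝ → ℝ) (x y : ℝ) : ℝ := deriv (fun x' => G (x', y)) x

/-- Partial derivative in the second (scalar) variable. -/
def d2 (G : ℝ × ℝ → ℝ) (x y : ℝ) : ℝ := deriv (fun y' => G (x, y')) y

/-- Second partial derivative in the first variable. -/
def d11 (G : ℝ × ℝ → ℝ) (x y : ℝ) : ℝ := deriv (fun x' => d1 G x' y) x

/-- Mixed partial derivative: derivative in the second variable of G₁. -/
def d12 (G : ℝ × ℝ → ℝ) (x y : ℝ) : ℝ := deriv (fun y' => d1 G x y') y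

/-- Mixed partial derivative: derivative in the first variable of G₂. -/
def d21 (G : ℝ × ℝ → ℝ) (x y : ℝ) : ℝ := deriv (fun x' => d2 G x' y) x

/-- Ψ(x,y) = −F₂(x,y)/F₁(x,y). -/
def Psi1d (F : ℝ × ℝ → ℝ) (x y : ℝ) : ℝ := -(d2 F x y) / d1 F x y

/-- Ω(x,y) = g₂(x,y) + Ψ(x,y)·g₁(x,y). -/
def Omega1d (F g : ℝ × ℝ → ℝ) (x y : ℝ) : ℝ := d2 g x y + Psi1d F x y * d1 g x y

/-- Uᶠ(x,y) = F₂ + F₁·φ₂(z,y) + φ₂₁(z,y)·F(x,y)/φ₁(z,y), with z = φ(·,y)⁻¹(x). -/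
def U1d (F φ φinv : ℝ × ℝ → ℝ) (x y : ℝ) : ℝ :=
  d2 F x y + d1 F x y * d2 φ (φinv (x, y)) y +
    d21 φ (φinv (x, y)) y * F (x, y) / d1 φ (φinv (x, y)) y

/-- Vᶠ(x,y) = φ₁₁(z,y)·F(x,y)/φ₁(z,y)² + F₁(x,y), with z = φ(·,y)⁻¹(x). -/
def V1d (F φ φinv : ℝ × ℝ → ℝ) (x y : ℝ) : ℝ :=
  d11 φ (φinv (x, y)) y * F (x, y) / (d1 φ (φinv (x, y)) y) ^ 2 + d1 F x y

/-- Ψᶠ(x,y) = φ₂(z,y) − Uᶠ(x,y)/Vᶠ(x,y). -/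
def Psiphi1d (F φ φinv : ℝ × ℝ → ℝ) (x y : ℝ) : ℝ :=
  d2 φ (φinv (x, y)) y - U1d F φ φinv x y / V1d F φ φinv x y

/-- Ωᶠ(x,y) = g₂(x,y) + Ψᶠ(x,y)·g₁(x,y). -/
def Omegaphi1d (F g φ φinv : ℝ × ℝ → ℝ) (x y : ℝ) : ℝ :=
  d2 g x y + Psiphi1d F φ φinv x y * d1 g x y

/-! `U^φ` and `V^φ` are chosen so that `Ψ^φ` and `Ψ` differ by a multiple of `F`: wherever `F₁`
and `V^φ` do not vanish, `Ψ^φ = Ψ - F · C / V^φ`, where `C` is the left-hand side of the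
characterization. A product with `F` is differentiable in `x` at a root of `F` as soon as the other
factor is continuous, and its derivative is `F₁` times that factor. Since `V^φ = F₁` at a root,
`∂ₓΩ^φ = ∂ₓΩ - C · g₁` there, so `∂ₓΩ^φ` vanishes exactly when `C = ∂ₓΩ / g₁`. If `F₁₁` and `g₁₁`
vanish, this quotient is `g₁₂ / g₁ - F₁₂ / F₁`. -/

/-- The correction `φ₁₂ / φ₁ - φ₂ φ₁₁ / φ₁² - F₂ φ₁₁ / (F₁ φ₁²)`, with `φ` evaluated at
`z = φ(·, y)⁻¹(x)`, which reparameterizing with `φ` subtracts from `∂ₓΨ` at the roots of `F`. -/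
def reparamCorrection (F φ φinv : ℝ × ℝ → ℝ) (x y : ℝ) : ℝ :=
  d12 φ (φinv (x, y)) y / d1 φ (φinv (x, y)) y -
    d2 φ (φinv (x, y)) y * d11 φ (φinv (x, y)) y / d1 φ (φinv (x, y)) y ^ 2 -
    d2 F x y * d11 φ (φinv (x, y)) y / (d1 F x y * d1 φ (φinv (x, y)) y ^ 2)

theorem hasDerivAt_smul_of_continuousAt_of_eq_zero {𝕜 E : Type*} [NontriviallyNormedField 𝕜]
    [NormedAddCommGroup E] [NormedSpace 𝕜 E] {c : 𝕜 → 𝕜} {f : 𝕜 → E} {f' : E} {x : 𝕜}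
    (hc : ContinuousAt c x) (hf : HasDerivAt f f' x) (hx : f x = 0) :
    HasDerivAt (fun t => c t • f t) (c x • f') x := by
  rw [hasDerivAt_iff_tendsto_slope] at hf ⊢
  have hslope : slope (fun t => c t • f t) x = fun t => c t • slope f x t := by
    ext t
    simp only [slope, vsub_eq_sub, hx, smul_zero, sub_zero, smul_comm (c t)]
  rw [hslope]
  exact (hc.tendsto.mono_left nhdsWithin_le_nhds).smul hf

section PartialDerivatives

variable {G : ℝ × ℝ → ℝ}

theorem hasDerivAt_d1 {x y : ℝ} (hG : DifferentiableAt ℝ G (x, y)) :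
    HasDerivAt (fun x' => G (x', y)) (d1 G x y) x :=
  DifferentiableAt.hasDerivAt (by fun_prop)

theorem d1_eq_fderiv {x y : ℝ} (hG : DifferentiableAt ℝ G (x, y)) :
    d1 G x y = fderiv ℝ G (x, y) (1, 0) :=
  (hG.hasFDerivAt.comp_hasDerivAt x
    ((hasDerivAt_id x).prodMk (hasDerivAt_const x y))).deriv

theorem d2_eq_fderiv {x y : ℝ} (hG : DifferentiableAt ℝ G (x, y)) :
    d2 G x y = fderiv ℝ G (x, y) (0, 1) :=
  (hG.hasFDerivAt.comp_hasDerivAt y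
    ((hasDerivAt_const y x).prodMk (hasDerivAt_id y))).deriv

theorem contDiff_d1 {n : WithTop ℕ∞} (hG : ContDiff ℝ (n + 1) G) :
    ContDiff ℝ n (fun p : ℝ × ℝ => d1 G p.1 p.2) := by
  simp only [d1_eq_fderiv (hG.differentiable (by simp) _)]
  exact (hG.fderiv_right le_rfl).clm_apply contDiff_const

theorem contDiff_d2 {n : WithTop ℕ∞} (hG : ContDiff ℝ (n + 1) G) :
    ContDiff ℝ n (fun p : ℝ × ℝ => d2 G p.1 p.2) := by
  simp only [d2_eq_fderiv (hG.differentiable (by simp) _)]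
  exact (hG.fderiv_right le_rfl).clm_apply contDiff_const

theorem continuous_d1 (hG : ContDiff ℝ 1 G) : Continuous fun p : ℝ × ℝ => d1 G p.1 p.2 :=
  (contDiff_d1 (n := 0) (by simpa using hG)).continuous

theorem continuous_d2 (hG : ContDiff ℝ 1 G) : Continuous fun p : ℝ × ℝ => d2 G p.1 p.2 :=
  (contDiff_d2 (n := 0) (by simpa using hG)).continuous

theorem continuous_d11 (hG : ContDiff ℝ 2 G) : Continuous fun p : ℝ × ℝ => d11 G p.1 p.2 :=
  continuous_d1 (contDiff_d1 hG)

theorem continuous_d12 (hG : ContDiff ℝ 2 G) : Continuous fun p : ℝ × ℝ => d12 G p.1 p.2 :=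
  continuous_d2 (contDiff_d1 hG)

theorem d21_eq_d12 (hG : ContDiff ℝ 2 G) (x y : ℝ) : d21 G x y = d12 G x y := by
  have hG' : Differentiable ℝ G := hG.differentiable (by simp)
  have hfd : Differentiable ℝ (fderiv ℝ G) :=
    (hG.fderiv_right (m := 1) (by norm_num)).differentiable (by simp)
  have hsnd (v w : ℝ × ℝ) : fderiv ℝ (fun p => fderiv ℝ G p v) (x, y) w =
      fderiv ℝ (fderiv ℝ G) (x, y) w v := by
    rw [fderiv_clm_apply (hfd _) (differentiableAt_const _)]
    simp
  have h21 : d21 G x y = fderiv ℝ (fderiv ℝ G) (x, y) (1, 0) (0, 1) := by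
    change d1 (fun p => d2 G p.1 p.2) x y = _
    rw [d1_eq_fderiv ((contDiff_d2 (n := 1) hG).differentiable (by simp) _)]
    simp only [d2_eq_fderiv (hG' _), hsnd]
  have h12 : d12 G x y = fderiv ℝ (fderiv ℝ G) (x, y) (0, 1) (1, 0) := by
    change d2 (fun p => d1 G p.1 p.2) x y = _
    rw [d2_eq_fderiv ((contDiff_d1 (n := 1) hG).differentiable (by simp) _)]
    simp only [d1_eq_fderiv (hG' _), hsnd]
  rw [h21, h12]
  exact hG.contDiffAt.isSymmSndFDerivAt (by simp) _ _

end PartialDerivatives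

theorem continuousAt_of_fibre_leftInverse {φ φinv : ℝ × ℝ → ℝ} (hφ : ContDiff ℝ 1 φ) {x y : ℝ}
    (hleft : ∀ z, φinv (φ (z, y), y) = z) (hright : φ (φinv (x, y), y) = x)
    (hφ1 : d1 φ (φinv (x, y)) y ≠ 0) : ContinuousAt (fun x' => φinv (x', y)) x := by
  have hstrict : HasStrictDerivAt (fun z => φ (z, y)) (d1 φ (φinv (x, y)) y) (φinv (x, y)) :=
    ContDiffAt.hasStrictDerivAt (n := 1) (by fun_prop) (by simp)
  have hinv := hstrict.to_local_left_inverse hφ1 (g := fun x' => φinv (x', y)) (.of_forall hleft)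
  simpa only [hright] using hinv.hasDerivAt.continuousAt

section Reparametrization

variable {F g φ φinv : ℝ × ℝ → ℝ} {x y : ℝ}

theorem V1d_eq_d1_of_root (hroot : F (x, y) = 0) : V1d F φ φinv x y = d1 F x y := by
  simp [V1d, hroot]

theorem Psiphi1d_eq_Psi1d_sub (hφ : ContDiff ℝ 2 φ) (hF1 : d1 F x y ≠ 0)
    (hV : V1d F φ φinv x y ≠ 0) :
    Psiphi1d F φ φinv x y =
      Psi1d F x y - reparamCorrection F φ φinv x y / V1d F φ φinv x y * F (x, y) := by
  have hnum : d1 F x y * (d2 φ (φinv (x, y)) y * V1d F φ φinv x y - U1d F φ φinv x y) =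
      -d2 F x y * V1d F φ φinv x y - d1 F x y * reparamCorrection F φ φinv x y * F (x, y) := by
    have hinv := mul_inv_cancel₀ hF1
    simp only [V1d, U1d, reparamCorrection, d21_eq_d12 hφ, div_eq_mul_inv, mul_inv]
    grind
  rw [Psiphi1d, Psi1d]
  field_simp
  linear_combination hnum

theorem Omegaphi1d_eq_Omega1d_sub (hφ : ContDiff ℝ 2 φ) (hF1 : d1 F x y ≠ 0)
    (hV : V1d F φ φinv x y ≠ 0) :
    Omegaphi1d F g φ φinv x y =
      Omega1d F g x y -
        reparamCorrection F φ φinv x y * d1 g x y / V1d F φ φinv x y * F (x, y) := by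
  rw [Omegaphi1d, Omega1d, Psiphi1d_eq_Psi1d_sub hφ hF1 hV]
  ring

theorem continuousAt_V1d (hF : ContDiff ℝ 1 F) (hφ : ContDiff ℝ 2 φ)
    (hφinv : ContinuousAt (fun x' => φinv (x', y)) x) (hφ1 : d1 φ (φinv (x, y)) y ≠ 0) :
    ContinuousAt (fun x' => V1d F φ φinv x' y) x := by
  have hz : ContinuousAt (fun x' => (φinv (x', y), y)) x := hφinv.prodMk continuousAt_const
  have hφ1' := (continuous_d1 (hφ.of_le (by norm_num))).continuousAt.comp hz
  have hφ11 := (continuous_d11 hφ).continuousAt.comp hz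
  have hF0 := (hF.continuous.comp (Continuous.prodMk_left y)).continuousAt (x := x)
  have hF1 : ContinuousAt (fun x' => d1 F x' y) x :=
    (Continuous.uncurry_right y (continuous_d1 hF)).continuousAt
  exact ((hφ11.mul hF0).div (hφ1'.pow 2) (pow_ne_zero 2 hφ1)).add hF1

theorem continuousAt_reparamCorrection (hF : ContDiff ℝ 1 F) (hφ : ContDiff ℝ 2 φ)
    (hφinv : ContinuousAt (fun x' => φinv (x', y)) x) (hφ1 : d1 φ (φinv (x, y)) y ≠ 0)
    (hF1 : d1 F x y ≠ 0) : ContinuousAt (fun x' => reparamCorrection F φ φinv x' y) x := by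
  have hz : ContinuousAt (fun x' => (φinv (x', y), y)) x := hφinv.prodMk continuousAt_const
  have hφC1 : ContDiff ℝ 1 φ := hφ.of_le (by norm_num)
  have hφ1' := (continuous_d1 hφC1).continuousAt.comp hz
  have hφ2 := (continuous_d2 hφC1).continuousAt.comp hz
  have hφ11 := (continuous_d11 hφ).continuousAt.comp hz
  have hφ12 := (continuous_d12 hφ).continuousAt.comp hz
  have hF1' : ContinuousAt (fun x' => d1 F x' y) x :=
    (Continuous.uncurry_right y (continuous_d1 hF)).continuousAt
  have hF2 : ContinuousAt (fun x' => d2 F x' y) x :=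
    (Continuous.uncurry_right y (continuous_d2 hF)).continuousAt
  exact ((hφ12.div hφ1' hφ1).sub ((hφ2.mul hφ11).div (hφ1'.pow 2) (pow_ne_zero 2 hφ1))).sub
    ((hF2.mul hφ11).div (hF1'.mul (hφ1'.pow 2)) (mul_ne_zero hF1 (pow_ne_zero 2 hφ1)))

theorem hasDerivAt_Omega1d (hF : ContDiff ℝ 2 F) (hg : ContDiff ℝ 2 g) (hF1 : d1 F x y ≠ 0) :
    HasDerivAt (fun x' => Omega1d F g x' y)
      (d12 g x y - d12 F x y / d1 F x y * d1 g x y +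
        (d2 F x y * d11 F x y / d1 F x y ^ 2 * d1 g x y - d2 F x y / d1 F x y * d11 g x y)) x := by
  have hasDerivAt_fst {G : ℝ × ℝ → ℝ} (hG : ContDiff ℝ 2 G) :
      HasDerivAt (fun x' => d1 G x' y) (d11 G x y) x :=
    hasDerivAt_d1 ((contDiff_d1 (n := 1) hG).differentiable (by simp) _)
  have hasDerivAt_snd {G : ℝ × ℝ → ℝ} (hG : ContDiff ℝ 2 G) :
      HasDerivAt (fun x' => d2 G x' y) (d12 G x y) x := by
    rw [← d21_eq_d12 hG]
    exact hasDerivAt_d1 ((contDiff_d2 (n := 1) hG).differentiable (by simp) _)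
  have hΨ := (hasDerivAt_snd hF).neg.div (hasDerivAt_fst hF) hF1
  refine ((hasDerivAt_snd hg).add (hΨ.mul (hasDerivAt_fst hg))).congr_deriv ?_
  simp only [Pi.div_apply, Pi.neg_apply]
  field_simp
  ring

theorem hasDerivAt_Omegaphi1d_of_root (hF : ContDiff ℝ 2 F) (hg : ContDiff ℝ 2 g)
    (hφ : ContDiff ℝ 2 φ) (hφinv : ContinuousAt (fun x' => φinv (x', y)) x)
    (hφ1 : d1 φ (φinv (x, y)) y ≠ 0) (hroot : F (x, y) = 0) (hF1 : d1 F x y ≠ 0) :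
    HasDerivAt (fun x' => Omegaphi1d F g φ φinv x' y)
      (d12 g x y - d12 F x y / d1 F x y * d1 g x y +
        (d2 F x y * d11 F x y / d1 F x y ^ 2 * d1 g x y - d2 F x y / d1 F x y * d11 g x y) -
        reparamCorrection F φ φinv x y * d1 g x y) x := by
  have hFC1 : ContDiff ℝ 1 F := hF.of_le (by norm_num)
  have hV0 : V1d F φ φinv x y ≠ 0 := by rwa [V1d_eq_d1_of_root hroot]
  have hVcont := continuousAt_V1d hFC1 hφ hφinv hφ1
  have hF1cont : ContinuousAt (fun x' => d1 F x' y) x :=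
    (Continuous.uncurry_right y (continuous_d1 hFC1)).continuousAt
  have hg1cont : ContinuousAt (fun x' => d1 g x' y) x :=
    (Continuous.uncurry_right y (continuous_d1 (hg.of_le (by norm_num)))).continuousAt
  have hcorrection := hasDerivAt_smul_of_continuousAt_of_eq_zero
    (((continuousAt_reparamCorrection hFC1 hφ hφinv hφ1 hF1).mul hg1cont).div hVcont hV0)
    (hasDerivAt_d1 (hFC1.differentiable (by simp) _)) hroot
  have hΩ := (hasDerivAt_Omega1d hF hg hF1).sub hcorrection
  refine (hΩ.congr_of_eventuallyEq ?_).congr_deriv ?_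
  · filter_upwards [hF1cont.eventually_ne hF1, hVcont.eventually_ne hV0] with x' hF1' hV'
    exact Omegaphi1d_eq_Omega1d_sub hφ hF1' hV'
  · simp only [Pi.div_apply, Pi.mul_apply, smul_eq_mul, V1d_eq_d1_of_root hroot,
      div_mul_cancel₀ _ hF1]

end Reparametrization

section AffineInFirst

variable {G : ℝ × ℝ → ℝ} {a b : ℝ → ℝ}

theorem d1_of_affine (hG : ∀ x y, G (x, y) = a y * x + b y) (x y : ℝ) : d1 G x y = a y := by
  simp [d1, hG]

theorem d11_of_affine (hG : ∀ x y, G (x, y) = a y * x + b y) (x y : ℝ) : d11 G x y = 0 := by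
  simp only [d11, d1_of_affine hG, deriv_const]

end AffineInFirst

theorem stmt9_general {F g φ φinv : ℝ × ℝ → ℝ} {x y : ℝ} (hF : ContDiff ℝ 2 F)
    (hg : ContDiff ℝ 2 g) (hφ : ContDiff ℝ 2 φ) (hleft : ∀ z, φinv (φ (z, y), y) = z)
    (hright : φ (φinv (x, y), y) = x) (hφ1 : d1 φ (φinv (x, y)) y ≠ 0)
    (hroot : F (x, y) = 0) (hF1 : d1 F x y ≠ 0) (hg1 : d1 g x y ≠ 0) :
    deriv (fun x' => Omegaphi1d F g φ φinv x' y) x = 0 ↔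
      reparamCorrection F φ φinv x y =
        d12 g x y / d1 g x y - d12 F x y / d1 F x y +
          (d2 F x y * d11 F x y / d1 F x y ^ 2 -
            d2 F x y * d11 g x y / (d1 F x y * d1 g x y)) := by
  have hφinv := continuousAt_of_fibre_leftInverse (hφ.of_le (by norm_num)) hleft hright hφ1
  rw [(hasDerivAt_Omegaphi1d_of_root hF hg hφ hφinv hφ1 hroot hF1).deriv, sub_eq_zero, eq_comm,
    ← eq_div_iff hg1]
  congr! 1
  field_simp

/-- 1-D characterization of super-efficiency of the reparameterized formula. -/
theorem stmt9 (F g : ℝ × ℝ → ℝ) (hF : ContDiff ℝ (⊤ : ℕ∞) F) (hg : ContDiff ℝ (⊤ : ℕ∞) g)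
    (ag mg aF bF : ℝ → ℝ)
    (hag : ContDiff ℝ (⊤ : ℕ∞) ag) (hmg : ContDiff ℝ (⊤ : ℕ∞) mg)
    (haF : ContDiff ℝ (⊤ : ℕ∞) aF) (hbF : ContDiff ℝ (⊤ : ℕ∞) bF)
    (haF0 : ∀ y : ℝ, aF y ≠ 0) (hag0 : ∀ y : ℝ, ag y ≠ 0)
    (hgdef : ∀ x y : ℝ, g (x, y) = ag y * x + mg y)
    (hFdef : ∀ x y : ℝ, F (x, y) = aF y * x + bF y)
    (xs : ℝ → ℝ) (hxs : Differentiable ℝ xs)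
    (hroot : ∀ y : ℝ, F (xs y, y) = 0)
    (φ : ℝ × ℝ → ℝ) (hφ : ContDiff ℝ (⊤ : ℕ∞) φ)
    (φinv : ℝ × ℝ → ℝ) (hφinv : ContDiff ℝ (⊤ : ℕ∞) φinv)
    (hleft : ∀ z y : ℝ, φinv (φ (z, y), y) = z)
    (hright : ∀ x y : ℝ, φ (φinv (x, y), y) = x)
    (hphi1 : ∀ z y : ℝ, d1 φ z y ≠ 0)
    (zs : ℝ → ℝ) (hzs : ∀ y : ℝ, zs y = φinv (xs y, y)) :
    (∀ y : ℝ, deriv (fun x => Omegaphi1d F g φ φinv x y) (xs y) = 0) ↔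
    (∀ y : ℝ,
      d12 φ (zs y) y / d1 φ (zs y) y -
        d2 φ (zs y) y * d11 φ (zs y) y / (d1 φ (zs y) y) ^ 2 -
        d2 F (xs y) y * d11 φ (zs y) y / (d1 F (xs y) y * (d1 φ (zs y) y) ^ 2) =
      d12 g (xs y) y / d1 g (xs y) y - d12 F (xs y) y / d1 F (xs y) y) := by
  refine forall_congr' fun y => ?_
  simpa only [reparamCorrection, ← hzs, d11_of_affine hFdef, d11_of_affine hgdef, mul_zero,
      zero_div, sub_zero, add_zero] using
    stmt9_general (contDiff_infty.1 hF 2) (contDiff_infty.1 hg 2) (contDiff_infty.1 hφ 2)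
      (hleft · y) (hright _ y) (hphi1 _ y) (hroot y) (d1_of_affine hFdef _ y ▸ haF0 y)
      (d1_of_affine hgdef _ y ▸ hag0 y)
end
end

section
/- (Consistency and efficiency of the localized separable estimator.) For every y ∈ ℝ^{d_y}: (i) Ω^ψ_loc(x⋆(y), y) = ∇h(y); and (ii) the derivative in x at x⋆(y) of the localized map x ↦ Ω^{ψ_{x,y}}(x, y) coincides with the derivative in x at x⋆(y) of the frozen-parameter map x ↦ Ω^{ψ_{x⋆(y),y}}(x, y); in particular their operator norms are equal: C_y(Ω^ψ_loc) = C_y(Ω^{ψ_{x⋆(y),y}}). -/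
noncomputable section

open ContinuousLinearMap RealInnerProductSpace

variable {dx dy : ℕ}

/-- Separable localized change of variable ψ_{x̄,ȳ}(z,y) = R(x̄,y) Q(z,ȳ) + x̄. -/
def psiSep (R : E dx × E dy → (E dx →L[ℝ] E dx)) (Q : E dx × E dy → E dx)
    (xb : E dx) (yb : E dy) : E dx × E dy → E dx :=
  fun p => R (xb, p.2) (Q (p.1, yb)) + xb

/-- Inverse in z of ψ_{x̄,ȳ}(·,y): z = Q(·,ȳ)⁻¹ (R(x̄,y)⁻¹ (x − x̄)). -/
def psiSepInv (R : E dx × E dy → (E dx →L[ℝ] E dx)) (Qinv : E dx × E dy → E dx)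
    (xb : E dx) (yb : E dy) : E dx × E dy → E dx :=
  fun p => Qinv (Ring.inverse (R (xb, p.2)) (p.1 - xb), yb)

/-- The localized estimator Ωᵠ_loc(x,y) = Ω^{ψ_{x,y}}(x,y). -/
def OmegaLoc (F : E dx × E dy → E dx) (g : E dx × E dy → ℝ)
    (R : E dx × E dy → (E dx →L[ℝ] E dx)) (Q Qinv : E dx × E dy → E dx)
    (x : E dx) (y : E dy) : E dy :=
  Omegaphi F g (psiSep R Q x y) (psiSepInv R Qinv x y) x y

/-! At a root of `F(·, y)` the second-order terms of `Uᶠ` and `Vᶠ` vanish because they are linear in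
`F(x, y)`. Hence `Vᶠ = F₁` and `Uᶠ = F₂ + F₁ φ₂`, the two occurrences of `φ₂` in `Ψᶠ` cancel, and
`Ωᶠ` takes the value of the implicit-function formula `Ω` whatever the change of variable is. This
gives consistency. For efficiency, let `Θ(x̄, x)` be the estimator at `x` whose change of variable
is localized at `x̄`. The map `Θ(·, x⋆)` is constant by the first part, so the derivative of the
diagonal `x ↦ Θ(x, x)` at `x⋆`, being the sum of the two partial derivatives, reduces to that of
`Θ(x⋆, ·)`. -/

open Filter
open scoped ContDiff Topology

section FDeriv

variable {𝕜 : Type*} [NontriviallyNormedField 𝕜]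
  {V W X : Type*} [NormedAddCommGroup V] [NormedSpace 𝕜 V] [NormedAddCommGroup W]
  [NormedSpace 𝕜 W] [NormedAddCommGroup X] [NormedSpace 𝕜 X]

lemma hasFDerivAt_along_graph_s11 {G : V × W → X} {s : W → V} {b : W}
    (hG : DifferentiableAt 𝕜 G (s b, b)) (hs : DifferentiableAt 𝕜 s b) :
    HasFDerivAt (fun b' => G (s b', b'))
      ((fderiv 𝕜 (fun a => G (a, b)) (s b)).comp (fderiv 𝕜 s b) +
        fderiv 𝕜 (fun b' => G (s b, b')) b) b := by
  have hleft : fderiv 𝕜 (fun a => G (a, b)) (s b) = (fderiv 𝕜 G (s b, b)).comp (.inl 𝕜 V W) :=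
    (hG.hasFDerivAt.comp (s b) (hasFDerivAt_prodMk_left (s b) b)).fderiv
  have hright : fderiv 𝕜 (fun b' => G (s b, b')) b = (fderiv 𝕜 G (s b, b)).comp (.inr 𝕜 V W) :=
    (hG.hasFDerivAt.comp b (hasFDerivAt_prodMk_right (s b) b)).fderiv
  have hgraph : HasFDerivAt (fun b' => (s b', b')) ((fderiv 𝕜 s b).prod (.id 𝕜 W)) b :=
    hs.hasFDerivAt.prodMk (hasFDerivAt_id b)
  refine (hG.hasFDerivAt.comp (f := fun b' => (s b', b')) b hgraph).congr_fderiv ?_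
  ext1 v
  rw [hleft, hright]
  exact (comp_inl_add_comp_inr (fderiv 𝕜 G (s b, b)) (fderiv 𝕜 s b v, v)).symm

lemma hasFDerivAt_diag_of_eventually_const {Θ : V × V → X} {a : V}
    (hΘ : DifferentiableAt 𝕜 Θ (a, a)) (hconst : ∀ᶠ t in 𝓝 a, Θ (t, a) = Θ (a, a)) :
    HasFDerivAt (fun t => Θ (t, t)) (fderiv 𝕜 (fun t => Θ (a, t)) a) a := by
  have hzero : fderiv 𝕜 (fun t => Θ (t, a)) a = 0 :=
    ((hasFDerivAt_const (Θ (a, a)) a).congr_of_eventuallyEq hconst).fderiv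
  simpa only [id_eq, hzero, zero_comp, zero_add] using
    hasFDerivAt_along_graph_s11 (s := id) hΘ differentiableAt_id

lemma contDiffAt_fderiv_fst {P : Type*} [NormedAddCommGroup P] [NormedSpace 𝕜 P] {p : P}
    {m : ℕ∞ω} {G : P → V × W → X} {a : P → V} {b : P → W}
    (hG : ContDiffAt 𝕜 (m + 1) (Function.uncurry G) (p, (a p, b p)))
    (ha : ContDiffAt 𝕜 m a p) (hb : ContDiffAt 𝕜 m b p) :
    ContDiffAt 𝕜 m (fun q => fderiv 𝕜 (fun a' => G q (a', b q)) (a q)) p := by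
  -- Treating `b q` as a free variable first means that the curve `b` need only be `C^m`.
  have hG' : ContDiffAt 𝕜 (m + 1) (Function.uncurry fun (r : P × W) a' => G r.1 (a', r.2))
      ((p, b p), a p) :=
    hG.comp ((p, b p), a p) (f := fun s => (s.1.1, (s.2, s.1.2))) (by fun_prop)
  have hfderiv : ContDiffAt 𝕜 m (fun r : P × W => fderiv 𝕜 (fun a' => G r.1 (a', r.2)) (a r.1))
      (p, b p) :=
    hG'.fderiv (g := fun r : P × W => a r.1) (ha.comp (p, b p) contDiffAt_fst) le_rfl
  exact hfderiv.comp p (contDiffAt_id.prodMk hb)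

lemma contDiffAt_fderiv_snd {P : Type*} [NormedAddCommGroup P] [NormedSpace 𝕜 P] {p : P}
    {m : ℕ∞ω} {G : P → V × W → X} {a : P → V} {b : P → W}
    (hG : ContDiffAt 𝕜 (m + 1) (Function.uncurry G) (p, (a p, b p)))
    (ha : ContDiffAt 𝕜 m a p) (hb : ContDiffAt 𝕜 m b p) :
    ContDiffAt 𝕜 m (fun q => fderiv 𝕜 (fun b' => G q (a q, b')) (b q)) p :=
  contDiffAt_fderiv_fst (G := fun q s => G q (s.2, s.1))
    (hG.comp (p, (b p, a p)) (f := fun s => (s.1, (s.2.2, s.2.1))) (by fun_prop)) hb ha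

lemma isUnit_fderiv_of_eventually_rightInverse [FiniteDimensional 𝕜 V] {f s : V → V} {w : V}
    (hf : DifferentiableAt 𝕜 f (s w)) (hs : DifferentiableAt 𝕜 s w)
    (hfs : ∀ᶠ w' in 𝓝 w, f (s w') = w') : IsUnit (fderiv 𝕜 f (s w)) := by
  have hone : fderiv 𝕜 f (s w) * fderiv 𝕜 s w = 1 :=
    (hf.hasFDerivAt.comp w hs.hasFDerivAt).unique ((hasFDerivAt_id w).congr_of_eventuallyEq hfs)
  have : IsDedekindFiniteMonoid (V →L[𝕜] V) := .of_injective toLinearMapRingHom coe_injective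
  exact .of_mul_eq_one _ hone

end FDeriv

section Hilbert

variable {H K : Type*} [NormedAddCommGroup H] [InnerProductSpace ℝ H] [CompleteSpace H]
  [NormedAddCommGroup K] [InnerProductSpace ℝ K] [CompleteSpace K]

lemma adjoint_comp_ringInverse_adjoint {A : H →L[ℝ] H} (hA : IsUnit A) :
    (adjoint A).comp (Ring.inverse (adjoint A)) = .id ℝ H :=
  Ring.mul_inverse_cancel _ hA.star

lemma contDiff_starLinearIsometryEquiv {V W : Type*} [NormedAddCommGroup V] [NormedSpace ℝ V]
    [NormedAddCommGroup W] [NormedSpace ℝ W] {n : ℕ∞ω} (L : V ≃ₗᵢ⋆[ℝ] W) : ContDiff ℝ n L :=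
  ((L : V →+ W).toRealLinearMap L.continuous).contDiff

variable {P : Type*} [NormedAddCommGroup P] [NormedSpace ℝ P] {p : P} {m : ℕ∞ω}

lemma contDiffAt_adjoint {A : P → H →L[ℝ] K} (hA : ContDiffAt ℝ m A p) :
    ContDiffAt ℝ m (fun q => adjoint (A q)) p :=
  (contDiff_starLinearIsometryEquiv (adjoint (𝕜 := ℝ) (E := H) (F := K))).contDiffAt.comp p hA

lemma contDiffAt_toDual_symm {ℓ : P → StrongDual ℝ H} (hℓ : ContDiffAt ℝ m ℓ p) :
    ContDiffAt ℝ m (fun q => (InnerProductSpace.toDual ℝ H).symm (ℓ q)) p :=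
  (contDiff_starLinearIsometryEquiv (InnerProductSpace.toDual ℝ H).symm).contDiffAt.comp p hℓ

lemma contDiffAt_ringInverse_comp {S : Type*} [NormedRing S] [NormedAlgebra ℝ S]
    [HasSummableGeomSeries S] {A : P → S} (hA : ContDiffAt ℝ m A p) (hu : IsUnit (A p)) :
    ContDiffAt ℝ m (fun q => Ring.inverse (A q)) p := by
  obtain ⟨u, hu⟩ := hu
  exact (hu ▸ contDiffAt_ringInverse ℝ u : ContDiffAt ℝ m Ring.inverse (A p)).comp p hA

end Hilbert

section ImplicitFunction

variable {F : E dx × E dy → E dx} {g : E dx × E dy → ℝ} {xs : E dy → E dx} {y : E dy}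

lemma pd1_comp_fderiv_add_pd2_of_root (hF : DifferentiableAt ℝ F (xs y, y))
    (hxs : DifferentiableAt ℝ xs y) (hroot : ∀ᶠ y' in 𝓝 y, F (xs y', y') = 0) :
    (pd1 F (xs y) y).comp (fderiv ℝ xs y) + pd2 F (xs y) y = 0 :=
  (hasFDerivAt_along_graph_s11 hF hxs).unique
    ((hasFDerivAt_const (0 : E dx) y).congr_of_eventuallyEq hroot)

lemma Psi_eq_adjoint_fderiv (hF : DifferentiableAt ℝ F (xs y, y))
    (hxs : DifferentiableAt ℝ xs y) (hroot : ∀ᶠ y' in 𝓝 y, F (xs y', y') = 0)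
    (hF1 : IsUnit (pd1 F (xs y) y)) : Psi F (xs y) y = adjoint (fderiv ℝ xs y) := by
  have hF2 : pd2 F (xs y) y = -(pd1 F (xs y) y).comp (fderiv ℝ xs y) :=
    eq_neg_of_add_eq_zero_right (pd1_comp_fderiv_add_pd2_of_root hF hxs hroot)
  rw [Psi, hF2, map_neg, adjoint_comp, neg_comp, comp_assoc,
    adjoint_comp_ringInverse_adjoint hF1, comp_id, neg_neg]

lemma gradient_along_graph (hg : DifferentiableAt ℝ g (xs y, y))
    (hxs : DifferentiableAt ℝ xs y) :
    gradient (fun y' => g (xs y', y')) y =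
      grad2 g (xs y) y + adjoint (fderiv ℝ xs y) (grad1 g (xs y) y) := by
  refine ext_inner_right ℝ fun v => ?_
  rw [inner_add_left, adjoint_inner_left, inner_gradient_left, grad1, grad2, inner_gradient_left,
    inner_gradient_left, (hasFDerivAt_along_graph_s11 hg hxs).fderiv, add_apply, add_comm,
    comp_apply]

lemma Omega_eq_gradient (hF : DifferentiableAt ℝ F (xs y, y))
    (hg : DifferentiableAt ℝ g (xs y, y)) (hxs : DifferentiableAt ℝ xs y)
    (hroot : ∀ᶠ y' in 𝓝 y, F (xs y', y') = 0) (hF1 : IsUnit (pd1 F (xs y) y)) :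
    Omega F g (xs y) y = gradient (fun y' => g (xs y', y')) y := by
  rw [Omega, Psi_eq_adjoint_fderiv hF hxs hroot hF1, gradient_along_graph hg hxs]

end ImplicitFunction

section Root

variable {F : E dx × E dy → E dx} {x : E dx} {y : E dy}

lemma Uphi_of_root (φ φinv : E dx × E dy → E dx) (h0 : F (x, y) = 0) :
    Uphi F φ φinv x y = pd2 F x y + (pd1 F x y).comp (pd2 φ (φinv (x, y)) y) := by
  simp [Uphi, phi21, h0]

lemma Vphi_of_root (φ φinv : E dx × E dy → E dx) (h0 : F (x, y) = 0) :
    Vphi F φ φinv x y = pd1 F x y := by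
  simp [Vphi, phi11, h0]

lemma Psiphi_of_root (φ φinv : E dx × E dy → E dx) (h0 : F (x, y) = 0)
    (hF1 : IsUnit (pd1 F x y)) : Psiphi F φ φinv x y = Psi F x y := by
  rw [Psiphi, Psi, Vphi_of_root φ φinv h0, Uphi_of_root φ φinv h0, map_add, adjoint_comp,
    add_comp, comp_assoc, adjoint_comp_ringInverse_adjoint hF1, comp_id, sub_add_cancel_right]

lemma Omegaphi_of_root (g : E dx × E dy → ℝ) (φ φinv : E dx × E dy → E dx)
    (h0 : F (x, y) = 0) (hF1 : IsUnit (pd1 F x y)) :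
    Omegaphi F g φ φinv x y = Omega F g x y := by
  rw [Omegaphi, Omega, Psiphi_of_root φ φinv h0 hF1]

end Root

section Smoothness

variable {P : Type*} [NormedAddCommGroup P] [NormedSpace ℝ P] {p : P} {m : ℕ∞ω}
  {x z w : P → E dx} {y : P → E dy}

lemma contDiffAt_pd1 {k : ℕ} {G : P → E dx × E dy → E k}
    (hG : ContDiffAt ℝ (m + 1) (Function.uncurry G) (p, (z p, y p)))
    (hz : ContDiffAt ℝ m z p) (hy : ContDiffAt ℝ m y p) :
    ContDiffAt ℝ m (fun q => pd1 (G q) (z q) (y q)) p :=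
  contDiffAt_fderiv_fst hG hz hy

lemma contDiffAt_pd2 {k : ℕ} {G : P → E dx × E dy → E k}
    (hG : ContDiffAt ℝ (m + 1) (Function.uncurry G) (p, (z p, y p)))
    (hz : ContDiffAt ℝ m z p) (hy : ContDiffAt ℝ m y p) :
    ContDiffAt ℝ m (fun q => pd2 (G q) (z q) (y q)) p :=
  contDiffAt_fderiv_snd hG hz hy

lemma contDiffAt_grad1 {G : P → E dx × E dy → ℝ}
    (hG : ContDiffAt ℝ (m + 1) (Function.uncurry G) (p, (z p, y p)))
    (hz : ContDiffAt ℝ m z p) (hy : ContDiffAt ℝ m y p) :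
    ContDiffAt ℝ m (fun q => grad1 (G q) (z q) (y q)) p :=
  contDiffAt_toDual_symm (contDiffAt_fderiv_fst hG hz hy)

lemma contDiffAt_grad2 {G : P → E dx × E dy → ℝ}
    (hG : ContDiffAt ℝ (m + 1) (Function.uncurry G) (p, (z p, y p)))
    (hz : ContDiffAt ℝ m z p) (hy : ContDiffAt ℝ m y p) :
    ContDiffAt ℝ m (fun q => grad2 (G q) (z q) (y q)) p :=
  contDiffAt_toDual_symm (contDiffAt_fderiv_snd hG hz hy)

variable {φ φinv : P → E dx × E dy → E dx}

lemma contDiffAt_grad1_inner {z₀ w₀ : E dx} {y₀ : E dy}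
    (hφ : ContDiffAt ℝ (m + 1) (Function.uncurry φ) (p, (z₀, y₀))) :
    ContDiffAt ℝ m (Function.uncurry fun (r : P × E dx) (v : E dx × E dy) =>
      grad1 (fun u => ⟪r.2, φ r.1 u⟫) v.1 v.2) ((p, w₀), (z₀, y₀)) := by
  have hinner : ContDiffAt ℝ (m + 1)
      (Function.uncurry fun (s : (P × E dx) × E dx × E dy) u => ⟪s.1.2, φ s.1.1 u⟫)
      (((p, w₀), (z₀, y₀)), (z₀, y₀)) :=
    ContDiffAt.inner ℝ (by fun_prop)
      (hφ.comp (((p, w₀), (z₀, y₀)), (z₀, y₀)) (f := fun s => (s.1.1.1, s.2)) (by fun_prop))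
  exact contDiffAt_grad1 (z := fun s : (P × E dx) × E dx × E dy => s.2.1) (y := fun s => s.2.2)
    hinner (by fun_prop) (by fun_prop)

lemma contDiffAt_phi11 (hφ : ContDiffAt ℝ (m + 2) (Function.uncurry φ) (p, (z p, y p)))
    (hz : ContDiffAt ℝ m z p) (hy : ContDiffAt ℝ m y p) (hw : ContDiffAt ℝ m w p) :
    ContDiffAt ℝ m (fun q => phi11 (φ q) (z q) (y q) (w q)) p := by
  have hgrad := contDiffAt_grad1_inner (m := m + 1) (w₀ := w p)
    (hφ.of_le (by rw [add_assoc, one_add_one_eq_two]))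
  have hphi : ContDiffAt ℝ m
      (fun r : P × E dx => phi11 (φ r.1) (z r.1) (y r.1) r.2) (p, w p) :=
    contDiffAt_pd1 (z := fun r : P × E dx => z r.1) (y := fun r => y r.1) hgrad
      (hz.comp (p, w p) contDiffAt_fst) (hy.comp (p, w p) contDiffAt_fst)
  exact hphi.comp p (contDiffAt_id.prodMk hw)

lemma contDiffAt_phi21 (hφ : ContDiffAt ℝ (m + 2) (Function.uncurry φ) (p, (z p, y p)))
    (hz : ContDiffAt ℝ m z p) (hy : ContDiffAt ℝ m y p) (hw : ContDiffAt ℝ m w p) :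
    ContDiffAt ℝ m (fun q => phi21 (φ q) (z q) (y q) (w q)) p := by
  have hgrad := contDiffAt_grad1_inner (m := m + 1) (w₀ := w p)
    (hφ.of_le (by rw [add_assoc, one_add_one_eq_two]))
  have hphi : ContDiffAt ℝ m
      (fun r : P × E dx => phi21 (φ r.1) (z r.1) (y r.1) r.2) (p, w p) :=
    contDiffAt_pd2 (z := fun r : P × E dx => z r.1) (y := fun r => y r.1) hgrad
      (hz.comp (p, w p) contDiffAt_fst) (hy.comp (p, w p) contDiffAt_fst)
  exact hphi.comp p (contDiffAt_id.prodMk hw)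

variable {F : E dx × E dy → E dx}

lemma contDiffAt_Uphi (hF : ContDiffAt ℝ (m + 1) F (x p, y p))
    (hφ : ContDiffAt ℝ (m + 2) (Function.uncurry φ) (p, (φinv p (x p, y p), y p)))
    (hz : ContDiffAt ℝ m (fun q => φinv q (x q, y q)) p)
    (hx : ContDiffAt ℝ m x p) (hy : ContDiffAt ℝ m y p)
    (hφ1 : IsUnit (pd1 (φ p) (φinv p (x p, y p)) (y p))) :
    ContDiffAt ℝ m (fun q => Uphi F (φ q) (φinv q) (x q) (y q)) p := by
  have hF' : ContDiffAt ℝ (m + 1) (Function.uncurry fun _ : P => F) (p, (x p, y p)) :=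
    hF.comp (p, (x p, y p)) contDiffAt_snd
  have hFx : ContDiffAt ℝ m (fun q => F (x q, y q)) p :=
    (hF.of_le le_self_add).comp p (hx.prodMk hy)
  have hφ' := hφ.of_le (add_le_add_right one_le_two m)
  have hφ1inv : ContDiffAt ℝ m
      (fun q => Ring.inverse (pd1 (φ q) (φinv q (x q, y q)) (y q))) p :=
    contDiffAt_ringInverse_comp (contDiffAt_pd1 hφ' hz hy) hφ1
  exact ((contDiffAt_pd2 hF' hx hy).add
    ((contDiffAt_pd1 hF' hx hy).clm_comp (contDiffAt_pd2 hφ' hz hy))).add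
    (hφ1inv.clm_comp (contDiffAt_phi21 hφ hz hy hFx))

lemma contDiffAt_Vphi (hF : ContDiffAt ℝ (m + 1) F (x p, y p))
    (hφ : ContDiffAt ℝ (m + 2) (Function.uncurry φ) (p, (φinv p (x p, y p), y p)))
    (hz : ContDiffAt ℝ m (fun q => φinv q (x q, y q)) p)
    (hx : ContDiffAt ℝ m x p) (hy : ContDiffAt ℝ m y p)
    (hφ1 : IsUnit (pd1 (φ p) (φinv p (x p, y p)) (y p))) :
    ContDiffAt ℝ m (fun q => Vphi F (φ q) (φinv q) (x q) (y q)) p := by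
  have hF' : ContDiffAt ℝ (m + 1) (Function.uncurry fun _ : P => F) (p, (x p, y p)) :=
    hF.comp (p, (x p, y p)) contDiffAt_snd
  have hFx : ContDiffAt ℝ m (fun q => F (x q, y q)) p :=
    (hF.of_le le_self_add).comp p (hx.prodMk hy)
  have hpd1 := contDiffAt_pd1 (hφ.of_le (add_le_add_right one_le_two m)) hz hy
  exact ((contDiffAt_ringInverse_comp (contDiffAt_adjoint hpd1) hφ1.star).clm_comp
    ((contDiffAt_phi11 hφ hz hy hFx).clm_comp (contDiffAt_ringInverse_comp hpd1 hφ1))).add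
    (contDiffAt_pd1 hF' hx hy)

lemma contDiffAt_Omegaphi {g : E dx × E dy → ℝ} (hF : ContDiffAt ℝ (m + 1) F (x p, y p))
    (hg : ContDiffAt ℝ (m + 1) g (x p, y p))
    (hφ : ContDiffAt ℝ (m + 2) (Function.uncurry φ) (p, (φinv p (x p, y p), y p)))
    (hz : ContDiffAt ℝ m (fun q => φinv q (x q, y q)) p)
    (hx : ContDiffAt ℝ m x p) (hy : ContDiffAt ℝ m y p)
    (hφ1 : IsUnit (pd1 (φ p) (φinv p (x p, y p)) (y p)))
    (hV : IsUnit (Vphi F (φ p) (φinv p) (x p) (y p))) :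
    ContDiffAt ℝ m (fun q => Omegaphi F g (φ q) (φinv q) (x q) (y q)) p := by
  have hΨ : ContDiffAt ℝ m (fun q => Psiphi F (φ q) (φinv q) (x q) (y q)) p :=
    (contDiffAt_adjoint
      (contDiffAt_pd2 (hφ.of_le (add_le_add_right one_le_two m)) hz hy)).sub
      ((contDiffAt_adjoint (contDiffAt_Uphi hF hφ hz hx hy hφ1)).clm_comp
        (contDiffAt_ringInverse_comp
          (contDiffAt_adjoint (contDiffAt_Vphi hF hφ hz hx hy hφ1)) hV.star))
  have hg' : ContDiffAt ℝ (m + 1) (Function.uncurry fun _ : P => g) (p, (x p, y p)) :=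
    hg.comp (p, (x p, y p)) contDiffAt_snd
  exact (contDiffAt_grad2 hg' hx hy).add (hΨ.clm_apply (contDiffAt_grad1 hg' hx hy))

end Smoothness

section Localization

variable {F : E dx × E dy → E dx} {g : E dx × E dy → ℝ} {x : E dx} {y : E dy}

lemma hasFDerivAt_Omegaphi_localized {φ φinv : E dx → E dx × E dy → E dx}
    (hF : ContDiffAt ℝ 2 F (x, y)) (hg : ContDiffAt ℝ 2 g (x, y))
    (h0 : F (x, y) = 0) (hF1 : IsUnit (pd1 F x y))
    (hφ : ContDiffAt ℝ 3 (Function.uncurry φ) (x, (φinv x (x, y), y)))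
    (hφinv : ContDiffAt ℝ 1 (fun q : E dx × E dx => φinv q.1 (q.2, y)) (x, x))
    (hφ1 : IsUnit (pd1 (φ x) (φinv x (x, y)) y)) :
    DifferentiableAt ℝ (fun t => Omegaphi F g (φ x) (φinv x) t y) x ∧
    HasFDerivAt (fun t => Omegaphi F g (φ t) (φinv t) t y)
      (fderiv ℝ (fun t => Omegaphi F g (φ x) (φinv x) t y) x) x := by
  have hΘ : DifferentiableAt ℝ
      (fun q : E dx × E dx => Omegaphi F g (φ q.1) (φinv q.1) q.2 y) (x, x) := by
    refine (contDiffAt_Omegaphi (m := 1) (φ := fun q : E dx × E dx => φ q.1)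
      (φinv := fun q => φinv q.1) (hF.of_le one_add_one_eq_two.le) (hg.of_le one_add_one_eq_two.le)
      ?_ hφinv contDiffAt_snd contDiffAt_const hφ1 ?_).differentiableAt one_ne_zero
    · exact (hφ.of_le (m := 1 + 2) (by norm_num)).comp ((x, x), (φinv x (x, y), y))
        (f := fun s => (s.1.1, s.2)) (by fun_prop)
    · rwa [Vphi_of_root _ _ h0]
  exact ⟨hΘ.comp x (hasFDerivAt_prodMk_right x x).differentiableAt,
    hasFDerivAt_diag_of_eventually_const hΘ (.of_forall fun t => by
      simp only [Omegaphi_of_root g _ _ h0 hF1])⟩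

variable {R : E dx × E dy → (E dx →L[ℝ] E dx)} {Q Qinv : E dx × E dy → E dx}

lemma psiSepInv_self (R : E dx × E dy → (E dx →L[ℝ] E dx)) (Qinv : E dx × E dy → E dx)
    (xb : E dx) (yb y : E dy) : psiSepInv R Qinv xb yb (xb, y) = Qinv (0, yb) := by
  simp [psiSepInv]

lemma pd1_psiSep {z xb : E dx} {yb : E dy} (hQ : DifferentiableAt ℝ (fun z' => Q (z', yb)) z) :
    pd1 (psiSep R Q xb yb) z y = R (xb, y) * pd1 Q z yb :=
  (((R (xb, y)).hasFDerivAt.comp z hQ.hasFDerivAt).add_const xb).fderiv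

lemma contDiffAt_psiSep {n : ℕ∞ω} {z : E dx} {yb : E dy} (hR : ContDiffAt ℝ n R (x, y))
    (hQ : ContDiffAt ℝ n (fun z' => Q (z', yb)) z) :
    ContDiffAt ℝ n (Function.uncurry fun xb => psiSep R Q xb yb) (x, (z, y)) := by
  have hR' : ContDiffAt ℝ n (fun s : E dx × E dx × E dy => R (s.1, s.2.2)) (x, (z, y)) :=
    hR.comp (x, (z, y)) (f := fun s => (s.1, s.2.2)) (by fun_prop)
  have hQ' : ContDiffAt ℝ n (fun s : E dx × E dx × E dy => Q (s.2.1, yb)) (x, (z, y)) :=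
    hQ.comp (x, (z, y)) (f := fun s => s.2.1) (by fun_prop)
  exact (hR'.clm_apply hQ').add contDiffAt_fst

lemma contDiffAt_psiSepInv {n : ℕ∞ω} {yb : E dy} (hR : ContDiffAt ℝ n R (x, y))
    (hR1 : IsUnit (R (x, y))) (hQinv : ContDiffAt ℝ n (fun w => Qinv (w, yb)) 0) :
    ContDiffAt ℝ n (fun q : E dx × E dx => psiSepInv R Qinv q.1 yb (q.2, y)) (x, x) := by
  have hR' : ContDiffAt ℝ n (fun q : E dx × E dx => R (q.1, y)) (x, x) :=
    hR.comp (x, x) (f := fun q => (q.1, y)) (by fun_prop)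
  have hw : ContDiffAt ℝ n (fun q : E dx × E dx => Ring.inverse (R (q.1, y)) (q.2 - q.1)) (x, x) :=
    (contDiffAt_ringInverse_comp hR' hR1).clm_apply (contDiffAt_snd.sub contDiffAt_fst)
  exact ContDiffAt.comp (x, x) (g := fun w => Qinv (w, yb)) (by simpa using hQinv) hw

theorem stmt11_general {xs : E dy → E dx}
    (hF : ContDiffAt ℝ 2 F (xs y, y)) (hg : ContDiffAt ℝ 2 g (xs y, y))
    (hF1 : IsUnit (pd1 F (xs y) y)) (hxs : DifferentiableAt ℝ xs y)
    (hroot : ∀ᶠ y' in 𝓝 y, F (xs y', y') = 0)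
    (hR : ContDiffAt ℝ 3 R (xs y, y)) (hR1 : IsUnit (R (xs y, y)))
    (hQ : ContDiffAt ℝ 3 (fun z => Q (z, y)) (Qinv (0, y)))
    (hQinv : ContDiffAt ℝ 1 (fun w => Qinv (w, y)) 0)
    (hright : ∀ᶠ w in 𝓝 0, Q (Qinv (w, y), y) = w) :
    OmegaLoc F g R Q Qinv (xs y) y = gradient (fun y' => g (xs y', y')) y ∧
    DifferentiableAt ℝ (fun x =>
      Omegaphi F g (psiSep R Q (xs y) y) (psiSepInv R Qinv (xs y) y) x y) (xs y) ∧
    HasFDerivAt (fun x => OmegaLoc F g R Q Qinv x y)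
      (fderiv ℝ (fun x =>
        Omegaphi F g (psiSep R Q (xs y) y) (psiSepInv R Qinv (xs y) y) x y) (xs y)) (xs y) := by
  have hQdiff := hQ.differentiableAt three_ne_zero
  have hQ1 : IsUnit (pd1 Q (Qinv (0, y)) y) :=
    isUnit_fderiv_of_eventually_rightInverse hQdiff (hQinv.differentiableAt one_ne_zero) hright
  have hz := psiSepInv_self R Qinv (xs y) y y
  constructor
  · rw [OmegaLoc, Omegaphi_of_root g _ _ hroot.self_of_nhds hF1]
    exact Omega_eq_gradient (hF.differentiableAt two_ne_zero) (hg.differentiableAt two_ne_zero)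
      hxs hroot hF1
  · refine hasFDerivAt_Omegaphi_localized (φ := fun xb => psiSep R Q xb y)
      (φinv := fun xb => psiSepInv R Qinv xb y) hF hg hroot.self_of_nhds hF1 ?_
      (contDiffAt_psiSepInv (hR.of_le (by norm_num)) hR1 hQinv) ?_
    · exact hz ▸ contDiffAt_psiSep hR hQ
    · rw [hz, pd1_psiSep hQdiff]
      exact hR1.mul hQ1

end Localization

/-- consistency and efficiency of the localized separable estimator. -/
theorem stmt11 (dx dy : ℕ) (hdx : 0 < dx) (hdy : 0 < dy)
    (F : E dx × E dy → E dx) (g : E dx × E dy → ℝ)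
    (hF : ContDiff ℝ (⊤ : ℕ∞) F) (hg : ContDiff ℝ (⊤ : ℕ∞) g)
    (hinv : ∀ (x : E dx) (y : E dy), IsUnit (pd1 F x y))
    (xs : E dy → E dx) (hxs : Differentiable ℝ xs)
    (hroot : ∀ y : E dy, F (xs y, y) = 0)
    (h : E dy → ℝ) (hh : ∀ y : E dy, h y = g (xs y, y))
    (R : E dx × E dy → (E dx →L[ℝ] E dx)) (hR : ContDiff ℝ (⊤ : ℕ∞) R)
    (hRinv : ∀ (x : E dx) (y : E dy), IsUnit (R (x, y)))
    (Q : E dx × E dy → E dx) (hQ : ContDiff ℝ (⊤ : ℕ∞) Q)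
    (Qinv : E dx × E dy → E dx) (hQinv : ContDiff ℝ (⊤ : ℕ∞) Qinv)
    (hleft : ∀ (z : E dx) (yb : E dy), Qinv (Q (z, yb), yb) = z)
    (hright : ∀ (w : E dx) (yb : E dy), Q (Qinv (w, yb), yb) = w)
    (hQ1 : ∀ (z : E dx) (yb : E dy), IsUnit (pd1 Q z yb)) :
    ∀ y : E dy,
      OmegaLoc F g R Q Qinv (xs y) y = gradient h y ∧
      fderiv ℝ (fun x => OmegaLoc F g R Q Qinv x y) (xs y) =
        fderiv ℝ (fun x =>
          Omegaphi F g (psiSep R Q (xs y) y) (psiSepInv R Qinv (xs y) y) x y) (xs y) ∧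
      ‖fderiv ℝ (fun x => OmegaLoc F g R Q Qinv x y) (xs y)‖ =
        ‖fderiv ℝ (fun x =>
          Omegaphi F g (psiSep R Q (xs y) y) (psiSepInv R Qinv (xs y) y) x y) (xs y)‖ := by
  intro y
  have key := stmt11_general (hF.of_le (by norm_cast)).contDiffAt
    (hg.of_le (by norm_cast)).contDiffAt (hinv _ _) (hxs y) (.of_forall hroot)
    (hR.of_le (by norm_cast)).contDiffAt (hRinv _ _)
    ((hQ.of_le (by norm_cast)).comp (contDiff_prodMk_left y)).contDiffAt
    ((hQinv.of_le (by norm_cast)).comp (contDiff_prodMk_left y)).contDiffAt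
    (.of_forall fun w => hright w y)
  exact ⟨funext hh ▸ key.1, key.2.2.fderiv, congrArg norm key.2.2.fderiv⟩
end
end
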